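/- If k̃_{ij} = K_{ii} + K_{jj} − 2K_{ij} > 0, then the pushforward of μ under the map ω ↦ d²_{ij}(ω) is the Gamma distribution with shape parameter d/2 and rate parameter 1/(2 k̃_{ij}) (equivalently, scale 2 k̃_{ij}). -/

import Mathlib

open MeasureTheory ProbabilityTheory Matrix
open scoped NNReal Topology

/-!
The `d` coordinates of `Yᵢ - Yⱼ` are linear forms in disjoint blocks of the Gaussian vector `ω`,
hence i.i.d. `N(0, k̃ᵢⱼ)`. The square of an `N(0, v)` variable is `Gamma(1/2, 1/(2v))`, and
independent Gamma variables of equal rate add up by adding their shapes. Both facts are read off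
the moment generating function `(r / (r - t)) ^ a` of `Gamma(a, r)`, which is finite near `0` and
therefore determines the law.
-/

section Mgf

theorem measure_ext_of_mgf_id_eventuallyEq {μ ν : Measure ℝ} [IsFiniteMeasure μ] [NeZero μ]
    [IsFiniteMeasure ν] (hμ : 0 ∈ interior (integrableExpSet id μ))
    (h : mgf id μ =ᶠ[𝓝 0] mgf id ν) : μ = ν := by
  have hν : 0 ∈ interior (integrableExpSet id ν) := by
    rw [mem_interior_iff_mem_nhds] at hμ ⊢
    filter_upwards [hμ, h] with t ht hmgf
    by_contra hundef
    exact (mgf_pos' (NeZero.ne μ) ht).ne' (hmgf.trans (mgf_undef hundef))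
  set S : Set ℂ :=
    Complex.re ⁻¹' (interior (integrableExpSet id μ) ∩ interior (integrableExpSet id ν)) with hS
  have hS_preconnected : IsPreconnected S :=
    ((convex_integrableExpSet.interior.inter convex_integrableExpSet.interior).linear_preimage
      Complex.reLm).isPreconnected
  have h_freq : ∃ᶠ z : ℂ in 𝓝[≠] 0, complexMGF id μ z = complexMGF id ν z := by
    have h_real : ∀ᶠ t : ℝ in 𝓝[≠] 0, complexMGF id μ t = complexMGF id ν t :=
      (h.filter_mono nhdsWithin_le_nhds).mono fun t ht ↦ by simp_rw [complexMGF_ofReal, ht]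
    have h_tendsto : Filter.Tendsto Complex.ofReal (𝓝[≠] 0) (𝓝[≠] 0) :=
      Complex.continuous_ofReal.continuousWithinAt.tendsto_nhdsWithin fun t ↦ by simp
    exact h_tendsto.frequently h_real.frequently
  have h_strip : S.EqOn (complexMGF id μ) (complexMGF id ν) :=
    (analyticOnNhd_complexMGF.mono fun _ hz ↦ hz.1).eqOn_of_preconnected_of_frequently_eq
      (analyticOnNhd_complexMGF.mono fun _ hz ↦ hz.2) hS_preconnected
      (by simpa [hS] using ⟨hμ, hν⟩) h_freq
  refine Measure.ext_of_charFun (funext fun t ↦ ?_)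
  rw [← complexMGF_id_mul_I, ← complexMGF_id_mul_I]
  exact h_strip (by simpa [hS] using ⟨hμ, hν⟩)

end Mgf

section Gamma

variable {a r t : ℝ}

lemma integral_gammaMeasure {E : Type*} [NormedAddCommGroup E] [NormedSpace ℝ E]
    (ha : 0 < a) (hr : 0 < r) (f : ℝ → E) :
    ∫ x, f x ∂gammaMeasure a r
      = (r ^ a / Real.Gamma a) •
        ∫ x in Set.Ioi 0, (x ^ (a - 1) * Real.exp (-(r * x))) • f x := by
  have h_meas : Measurable (gammaPDF a r) := (measurable_gammaPDFReal a r).ennreal_ofReal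
  rw [gammaMeasure, integral_withDensity_eq_integral_toReal_smul h_meas
      (ae_of_all _ fun _ ↦ ENNReal.ofReal_lt_top),
    ← integral_smul, ← integral_Ici_eq_integral_Ioi, ← integral_indicator measurableSet_Ici]
  congr with x
  rw [gammaPDF, ENNReal.toReal_ofReal (gammaPDFReal_nonneg ha hr x), gammaPDFReal,
    Set.indicator_apply]
  simp only [Set.mem_Ici]
  split_ifs
  · rw [smul_smul, mul_assoc]
  · rw [zero_smul]

lemma mgf_id_gammaMeasure (ha : 0 < a) (hr : 0 < r) (ht : t < r) :
    mgf id (gammaMeasure a r) t = (r / (r - t)) ^ a := by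
  have hrt : 0 < r - t := sub_pos.2 ht
  have h_exp (x : ℝ) : Real.exp (-(r * x)) * Real.exp (t * x) = Real.exp (-((r - t) * x)) := by
    rw [← Real.exp_add]
    ring_nf
  rw [mgf, integral_gammaMeasure ha hr]
  simp_rw [id_eq, smul_eq_mul, mul_assoc, h_exp]
  rw [Real.integral_rpow_mul_exp_neg_mul_Ioi ha hrt,
    Real.div_rpow zero_le_one hrt.le, Real.div_rpow hr.le hrt.le, Real.one_rpow]
  have := (Real.Gamma_pos_of_pos ha).ne'
  field_simp

lemma zero_mem_interior_integrableExpSet_gammaMeasure (ha : 0 < a) (hr : 0 < r) :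
    0 ∈ interior (integrableExpSet id (gammaMeasure a r)) := by
  refine mem_interior.2 ⟨Set.Iio r, fun t ht ↦ ?_, isOpen_Iio, hr⟩
  by_contra hundef
  have h_pos : 0 < (r / (r - t)) ^ a := Real.rpow_pos_of_pos (div_pos hr (sub_pos.2 ht)) a
  exact h_pos.ne' ((mgf_id_gammaMeasure ha hr ht).symm.trans (mgf_undef hundef))

variable {Ω : Type*} {mΩ : MeasurableSpace Ω} {P : Measure Ω}

lemma hasLaw_gammaMeasure_of_mgf [IsFiniteMeasure P] {X : Ω → ℝ} (ha : 0 < a) (hr : 0 < r)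
    (hX : AEMeasurable X P) (h : ∀ t < r, mgf X P t = (r / (r - t)) ^ a) :
    HasLaw X (gammaMeasure a r) P where
  aemeasurable := hX
  map_eq := by
    have := isProbabilityMeasure_gammaMeasure ha hr
    refine (measure_ext_of_mgf_id_eventuallyEq
      (zero_mem_interior_integrableExpSet_gammaMeasure ha hr) ?_).symm
    filter_upwards [Iio_mem_nhds hr] with t ht
    rw [mgf_id_map hX, h t ht, mgf_id_gammaMeasure ha hr ht]

theorem hasLaw_sum_gammaMeasure {ι : Type*} [Fintype ι] [Nonempty ι] {X : ι → Ω → ℝ} {a : ι → ℝ}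
    (ha : ∀ i, 0 < a i) (hr : 0 < r) (hX : ∀ i, HasLaw (X i) (gammaMeasure (a i) r) P)
    (h_indep : iIndepFun X P) :
    HasLaw (fun ω ↦ ∑ i, X i ω) (gammaMeasure (∑ i, a i) r) P := by
  have := h_indep.isProbabilityMeasure
  refine hasLaw_gammaMeasure_of_mgf (Finset.sum_pos (fun i _ ↦ ha i) Finset.univ_nonempty) hr
    (Finset.aemeasurable_fun_sum _ fun i _ ↦ (hX i).aemeasurable) fun t ht ↦ ?_
  have h_mgf (i : ι) : mgf (X i) P t = (r / (r - t)) ^ a i := by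
    rw [← mgf_id_map (hX i).aemeasurable, (hX i).map_eq, mgf_id_gammaMeasure (ha i) hr ht]
  rw [← Finset.sum_fn, h_indep.mgf_sum₀ fun i ↦ (hX i).aemeasurable,
    Real.rpow_sum_of_pos (div_pos hr (sub_pos.2 ht))]
  simp_rw [h_mgf]

end Gamma

section Gaussian

variable {Ω : Type*} {mΩ : MeasurableSpace Ω} {P : Measure Ω}

-- For `1 / (2 * v) ≤ t` both sides are junk values equal to `0`.
lemma mgf_sq_gaussianReal {v : ℝ≥0} (hv : v ≠ 0) (t : ℝ) :
    mgf (fun x ↦ x ^ 2) (gaussianReal 0 v) t = √((1 / (2 * v)) / (1 / (2 * v) - t)) := by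
  have h_pdf (x : ℝ) : gaussianPDFReal 0 v x • Real.exp (t * x ^ 2)
      = (√(2 * Real.pi * v))⁻¹ * Real.exp (-(1 / (2 * v) - t) * x ^ 2) := by
    rw [gaussianPDFReal, smul_eq_mul, mul_assoc, ← Real.exp_add]
    congr 2
    field_simp
    ring
  rw [mgf, integral_gaussianReal_eq_integral_smul hv]
  simp_rw [h_pdf]
  rw [integral_const_mul, integral_gaussian, ← Real.sqrt_inv, ← Real.sqrt_mul (by positivity)]
  congr 1
  field_simp

theorem hasLaw_sq_gaussianReal {X : Ω → ℝ} {v : ℝ≥0} (hv : v ≠ 0)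
    (hX : HasLaw X (gaussianReal 0 v) P) :
    HasLaw (fun ω ↦ X ω ^ 2) (gammaMeasure (1 / 2) (1 / (2 * v))) P := by
  have h_sq : HasLaw (fun x : ℝ ↦ x ^ 2) (gammaMeasure (1 / 2) (1 / (2 * v))) (gaussianReal 0 v) :=
    hasLaw_gammaMeasure_of_mgf (by positivity) (by positivity) (by fun_prop) fun t _ ↦ by
      rw [mgf_sq_gaussianReal hv, Real.sqrt_eq_rpow]
  exact h_sq.fun_comp hX

theorem hasLaw_sum_gaussianReal {ι : Type*} [Fintype ι] {X : ι → Ω → ℝ} {m : ι → ℝ} {v : ι → ℝ≥0}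
    (hX : ∀ i, HasLaw (X i) (gaussianReal (m i) (v i)) P) (h_indep : iIndepFun X P) :
    HasLaw (fun ω ↦ ∑ i, X i ω) (gaussianReal (∑ i, m i) (∑ i, v i)) P where
  map_eq := by
    have := h_indep.isProbabilityMeasure
    refine Measure.ext_of_charFun (funext fun t ↦ ?_)
    rw [h_indep.charFun_map_fun_sum_eq_prod fun i ↦ (hX i).aemeasurable]
    simp only [(hX _).map_eq, Finset.prod_apply, charFun_gaussianReal, ← Complex.exp_sum,
      Finset.sum_sub_distrib, Finset.mul_sum, Finset.sum_mul, Finset.sum_div, Complex.ofReal_sum,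
      NNReal.coe_sum]

lemma hasLaw_sum_const_mul_gaussianReal {ι : Type*} [Fintype ι] {X : ι → Ω → ℝ} {m : ι → ℝ}
    {v : ι → ℝ≥0} (hX : ∀ i, HasLaw (X i) (gaussianReal (m i) (v i)) P) (h_indep : iIndepFun X P)
    (a : ι → ℝ) :
    HasLaw (fun ω ↦ ∑ i, a i * X i ω)
      (gaussianReal (∑ i, a i * m i) (∑ i, .mk (a i ^ 2) (sq_nonneg _) * v i)) P :=
  hasLaw_sum_gaussianReal (fun i ↦ gaussianReal_const_mul (hX i) (a i))
    (h_indep.comp (fun i x ↦ a i * x) fun _ ↦ by fun_prop)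

end Gaussian

theorem iIndepFun_curry {ι κ Ω E : Type*} {mΩ : MeasurableSpace Ω} {mE : MeasurableSpace E}
    {P : Measure Ω} {X : ι × κ → Ω → E} (hX : AEMeasurable (fun ω p ↦ X p ω) P)
    (h_indep : iIndepFun X P) : iIndepFun (fun i ω k ↦ X (i, k) ω) P := by
  have := h_indep.isProbabilityMeasure
  have h_prob (p : ι × κ) : IsProbabilityMeasure (P.map (X p)) :=
    Measure.isProbabilityMeasure_map (hX.eval p)
  have h_curry : AEMeasurable (fun ω i k ↦ X (i, k) ω) P :=
    (MeasurableEquiv.curry ι κ E).measurable.comp_aemeasurable hX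
  have h_row (i : ι) : P.map (fun ω k ↦ X (i, k) ω)
      = Measure.infinitePi fun k ↦ P.map (X (i, k)) :=
    (h_indep.precomp (Prod.mk_right_injective i)).map_fun_eq_infinitePi_map₀ (h_curry.eval i)
  rw [iIndepFun_iff_map_fun_eq_infinitePi_map₀ h_curry]
  simp_rw [h_row]
  rw [← Measure.infinitePi_map_curry fun i k ↦ P.map (X (i, k)),
    ← h_indep.map_fun_eq_infinitePi_map₀ hX,
    AEMeasurable.map_map_of_aemeasurable (by fun_prop) hX]
  rfl

theorem hasLaw_sum_sq_sum_const_mul_gaussianReal {δ κ Ω : Type*} [Fintype δ] [Nonempty δ]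
    [Fintype κ] {mΩ : MeasurableSpace Ω} {P : Measure Ω} {X : δ × κ → Ω → ℝ}
    (hX : ∀ p, HasLaw (X p) (gaussianReal 0 1) P) (h_indep : iIndepFun X P)
    {a : κ → ℝ} (ha : 0 < ∑ l, a l ^ 2) :
    HasLaw (fun ω ↦ ∑ c, (∑ l, a l * X (c, l) ω) ^ 2)
      (gammaMeasure (Fintype.card δ / 2) (1 / (2 * ∑ l, a l ^ 2))) P := by
  obtain ⟨v, hv⟩ : ∃ v : ℝ≥0, (v : ℝ) = ∑ l, a l ^ 2 := ⟨⟨_, ha.le⟩, rfl⟩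
  rw [← hv] at ha ⊢
  have hv_ne : v ≠ 0 := (NNReal.coe_pos.1 ha).ne'
  have h_gaussian (c : δ) : HasLaw (fun ω ↦ ∑ l, a l * X (c, l) ω) (gaussianReal 0 v) P := by
    convert hasLaw_sum_const_mul_gaussianReal (fun l ↦ hX (c, l))
      (h_indep.precomp (Prod.mk_right_injective c)) a
    · simp
    · ext
      simp [hv]
  have h_sq_indep : iIndepFun (fun c ω ↦ (∑ l, a l * X (c, l) ω) ^ 2) P :=
    (iIndepFun_curry (by fun_prop) h_indep).comp (fun _ x ↦ (∑ l, a l * x l) ^ 2)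
      fun _ ↦ by fun_prop
  have h_shape : ∑ _ : δ, (1 / 2 : ℝ) = Fintype.card δ / 2 := by
    rw [Finset.sum_const, Finset.card_univ, nsmul_eq_mul, mul_one_div]
  rw [← h_shape]
  exact hasLaw_sum_gammaMeasure (fun _ ↦ by positivity) (by positivity)
    (fun c ↦ hasLaw_sq_gaussianReal hv_ne (h_gaussian c)) h_sq_indep

lemma mul_transpose_add_sub_two_mul_eq_sum_sq_sub {ι κ R : Type*} [Fintype κ] [CommRing R]
    (A : Matrix ι κ R) (i j : ι) :
    (A * Aᵀ) i i + (A * Aᵀ) j j - 2 * (A * Aᵀ) i j = ∑ l, (A i l - A j l) ^ 2 := by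
  simp only [mul_apply, transpose_apply, Finset.mul_sum, ← Finset.sum_add_distrib,
    ← Finset.sum_sub_distrib]
  exact Finset.sum_congr rfl fun l _ ↦ by ring

theorem pushforward_squared_distance_gamma_general {ι κ δ : Type*} [Fintype κ] [Fintype δ]
    [Nonempty δ] (A : Matrix ι κ ℝ) (i j : ι)
    (hpos : 0 < (A * Aᵀ) i i + (A * Aᵀ) j j - 2 * (A * Aᵀ) i j) :
    (Measure.pi fun _ : κ × δ ↦ gaussianReal 0 1).map
        (fun ω ↦ ∑ c, (∑ l, A i l * ω (l, c) - ∑ l, A j l * ω (l, c)) ^ 2)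
      = gammaMeasure (Fintype.card δ / 2)
        (1 / (2 * ((A * Aᵀ) i i + (A * Aᵀ) j j - 2 * (A * Aᵀ) i j))) := by
  rw [mul_transpose_add_sub_two_mul_eq_sum_sq_sub] at hpos ⊢
  simp_rw [← Finset.sum_sub_distrib, ← sub_mul]
  have h_law (p : κ × δ) : HasLaw (fun ω : κ × δ → ℝ ↦ ω p) (gaussianReal 0 1)
      (Measure.pi fun _ ↦ gaussianReal 0 1) :=
    (measurePreserving_eval (fun _ ↦ gaussianReal 0 1) p).hasLaw
  have h_indep : iIndepFun (fun (p : κ × δ) (ω : κ × δ → ℝ) ↦ ω p)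
      (Measure.pi fun _ ↦ gaussianReal 0 1) :=
    iIndepFun_pi (X := fun _ x ↦ x) fun _ ↦ aemeasurable_id
  exact (hasLaw_sum_sq_sum_const_mul_gaussianReal (fun p ↦ h_law p.swap)
    (h_indep.precomp Prod.swap_injective) hpos).map_eq

/-- If `k̃ᵢⱼ = K i i + K j j - 2 * K i j > 0` (with `K = A * Aᵀ`), then the pushforward
of the i.i.d. standard Gaussian product measure `μ` under the squared distance map
`ω ↦ d²ᵢⱼ(ω) = ∑ c, (Y i c ω - Y j c ω)²` is the Gamma distribution with shape `d / 2`
and rate `1 / (2 * k̃ᵢⱼ)`. -/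
theorem pushforward_squared_distance_gamma
    (n k d : ℕ) (hn : 0 < n) (hk : 0 < k) (hd : 0 < d)
    (A : Matrix (Fin n) (Fin k) ℝ)
    (μ : Measure ((Fin k × Fin d) → ℝ))
    (hμ : μ = Measure.pi (fun _ : Fin k × Fin d => gaussianReal 0 1))
    (K : Matrix (Fin n) (Fin n) ℝ) (hK : K = A * Aᵀ)
    (Y : Fin n → Fin d → ((Fin k × Fin d) → ℝ) → ℝ)
    (hY : ∀ i c ω, Y i c ω = ∑ l, A i l * ω (l, c))
    (i j : Fin n) (ktil : ℝ) (hktil : ktil = K i i + K j j - 2 * K i j)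
    (hpos : 0 < ktil) :
    μ.map (fun ω => ∑ c, (Y i c ω - Y j c ω) ^ 2)
      = gammaMeasure ((d : ℝ) / 2) (1 / (2 * ktil)) := by
  have := Fin.pos_iff_nonempty.1 hd
  subst hμ hK hktil
  simpa only [hY, Fintype.card_fin] using
    pushforward_squared_distance_gamma_general (δ := Fin d) A i j hpos
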